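/- Let N ≥ 1 and σ ∈ (0,1), and define f_σ : ℝ^N → ℝ by f_σ(ξ) = (2/π)·∫₀^{‖ξ‖} arctan(τ/σ) dτ. Then f_σ is convex on ℝ^N, continuously differentiable on ℝ^N, f_σ(0) = 0, and for every ξ ∈ ℝ^N one has (1 − √σ)·‖ξ‖ − √σ ≤ f_σ(ξ) ≤ ‖ξ‖ and ‖∇f_σ(ξ)‖ ≤ 1. -/

import Mathlib

theorem div_mul_self_le_aux (a b : ℝ) (ha : 0 ≤ a) : a / b * b ≤ a := by
  by_cases hb : b = 0
  · simpa [hb] using ha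
  · rw [div_mul_cancel₀ _ hb]

/-- Little-o of a function with zero derivative at `0`, composed with the norm. -/
theorem hasGradientAt_radial {E : Type*} [NormedAddCommGroup E] [InnerProductSpace ℝ E]
    [CompleteSpace E] (F g : ℝ → ℝ) (hF : ∀ t, HasDerivAt F (g t) t) (hg0 : g 0 = 0) (x : E) :
    HasGradientAt (fun y : E => F ‖y‖) ((g ‖x‖ / ‖x‖) • x) x := by
  by_cases hx : x = 0
  · subst hx
    have h := hF 0
    rw [hg0, hasDerivAt_iff_isLittleO_nhds_zero] at h
    rw [hasGradientAt_iff_isLittleO_nhds_zero]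
    have ht : Filter.Tendsto (fun y : E => ‖y‖) (nhds 0) (nhds 0) := tendsto_norm_zero
    have h2 := (h.comp_tendsto ht).norm_right
    rw [← Asymptotics.isLittleO_norm_right]
    simpa [Function.comp_def, -Asymptotics.isLittleO_norm_right] using h2
  · have hn : ‖x‖ ≠ 0 := norm_ne_zero_iff.mpr hx
    have h1 : HasFDerivAt (fun y : E => ‖y‖ ^ 2) (2 • (innerSL ℝ x)) x :=
      (hasStrictFDerivAt_norm_sq x).hasFDerivAt
    have h2 := h1.sqrt (by positivity)
    have h3 : HasFDerivAt (fun y : E => ‖y‖) ((1 / (2 * ‖x‖)) • (2 • (innerSL ℝ x))) x := by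
      simpa [Real.sqrt_sq] using h2
    have h4 := (hF ‖x‖).comp_hasFDerivAt x h3
    rw [hasGradientAt_iff_hasFDerivAt]
    refine h4.congr_fderiv ?_
    ext y
    simp
    field_simp

theorem continuous_radial {E : Type*} [NormedAddCommGroup E] [InnerProductSpace ℝ E]
    (g : ℝ → ℝ) (hg : Continuous g) (hg0 : g 0 = 0) :
    Continuous (fun x : E => (g ‖x‖ / ‖x‖) • x) := by
  rw [continuous_iff_continuousAt]
  intro x
  by_cases hx : x = 0
  · subst hx
    unfold ContinuousAt
    beta_reduce
    rw [smul_zero]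
    have ht : Filter.Tendsto (fun y : E => |g ‖y‖|) (nhds 0) (nhds 0) := by
      have : Continuous (fun y : E => |g ‖y‖|) := by fun_prop
      simpa [hg0] using this.tendsto 0
    refine squeeze_zero_norm (fun y => ?_) ht
    rw [norm_smul, norm_div, norm_norm, Real.norm_eq_abs]
    exact div_mul_self_le_aux _ _ (abs_nonneg _)
  · have hn : ‖x‖ ≠ 0 := norm_ne_zero_iff.mpr hx
    exact ((hg.comp continuous_norm).continuousAt.div continuous_norm.continuousAt hn).smul
      continuousAt_id

/-- Remark 4.2: the arctangent-type regularization
`f_σ ξ = (2/π) ∫₀^{‖ξ‖} arctan (τ/σ) dτ` is a suitable approximation of the Euclidean norm. -/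
theorem stmt5 (N : ℕ) (hN : 1 ≤ N) (σ : ℝ) (hσ : σ ∈ Set.Ioo (0:ℝ) 1)
    (f : EuclideanSpace ℝ (Fin N) → ℝ)
    (hf : ∀ ξ : EuclideanSpace ℝ (Fin N),
      f ξ = (2 / Real.pi) * ∫ τ in (0:ℝ)..‖ξ‖, Real.arctan (τ / σ)) :
    ConvexOn ℝ Set.univ f ∧ ContDiff ℝ 1 f ∧ f 0 = 0 ∧
      ∀ ξ : EuclideanSpace ℝ (Fin N),
        ((1 - Real.sqrt σ) * ‖ξ‖ - Real.sqrt σ ≤ f ξ ∧ f ξ ≤ ‖ξ‖) ∧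
          ‖gradient f ξ‖ ≤ 1 := by
  obtain ⟨h0, h1⟩ := hσ
  have hpi := Real.pi_pos
  set g : ℝ → ℝ := fun t => (2 / Real.pi) * Real.arctan (t / σ) with hg
  set F : ℝ → ℝ := fun t => ∫ τ in (0:ℝ)..t, g τ with hFdef
  have hgc : Continuous g := by
    have : Continuous (fun t : ℝ => t / σ) := by fun_prop
    exact continuous_const.mul (Real.continuous_arctan.comp this)
  have hg0 : g 0 = 0 := by simp [hg]
  have hfF : f = fun ξ => F ‖ξ‖ := by
    ext ξ
    rw [hf, hFdef]
    simp only [hg]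
    rw [intervalIntegral.integral_const_mul]
  have hint : ∀ a b : ℝ, IntervalIntegrable g MeasureTheory.volume a b :=
    fun a b => hgc.intervalIntegrable a b
  have hF : ∀ t, HasDerivAt F (g t) t := fun t =>
    intervalIntegral.integral_hasDerivAt_right (hint 0 t)
      (hgc.stronglyMeasurableAtFilter _ _) hgc.continuousAt
  have hgm : Monotone g := by
    intro a b hab
    simp only [hg]
    have : Real.arctan (a / σ) ≤ Real.arctan (b / σ) :=
      Real.arctan_strictMono.monotone (by gcongr)
    gcongr
  have hgnn : ∀ t, 0 ≤ t → 0 ≤ g t := fun t ht => hg0 ▸ hgm ht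
  have hg1 : ∀ t, g t ≤ 1 := by
    intro t
    have := Real.arctan_lt_pi_div_two (t / σ)
    calc g t ≤ 2 / Real.pi * (Real.pi / 2) := by simp only [hg]; gcongr
      _ = 1 := by field_simp
  have hF0 : F 0 = 0 := by simp [hFdef]
  have hsub : ∀ a b, F b - F a = ∫ τ in a..b, g τ := fun a b =>
    intervalIntegral.integral_interval_sub_left (hint 0 b) (hint 0 a)
  have hlow : ∀ a b, a ≤ b → g a * (b - a) ≤ F b - F a := by
    intro a b hab
    rw [hsub]
    have := intervalIntegral.integral_mono_on hab
      (intervalIntegrable_const (c := g a)) (hint a b) (fun x hx => hgm hx.1)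
    simpa [mul_comm] using this
  have hupp : ∀ b, 0 ≤ b → F b ≤ b := by
    intro b hb
    have := intervalIntegral.integral_mono_on hb (hint 0 b)
      (intervalIntegrable_const (c := (1:ℝ))) (fun x hx => hg1 x)
    simpa using this
  have hFmono : ∀ a b, 0 ≤ a → a ≤ b → F a ≤ F b := by
    intro a b ha hab
    have := hlow a b hab
    have := mul_nonneg (hgnn a ha) (sub_nonneg.mpr hab)
    linarith
  have hderiv : deriv F = g := funext fun t => (hF t).deriv
  have hconv : ConvexOn ℝ Set.univ F :=
    Monotone.convexOn_univ_of_deriv (fun t => (hF t).differentiableAt) (hderiv ▸ hgm)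
  have hgrad : ∀ ξ, HasGradientAt f ((g ‖ξ‖ / ‖ξ‖) • ξ) ξ := by
    intro ξ
    rw [hfF]
    exact hasGradientAt_radial F g hF hg0 ξ
  refine ⟨⟨convex_univ, ?_⟩, ?_, ?_, ?_⟩
  · intro x _ y _ a b ha hb hab
    rw [hfF]
    have h2 := hconv.2 (Set.mem_univ ‖x‖) (Set.mem_univ ‖y‖) ha hb hab
    refine le_trans (hFmono _ _ (norm_nonneg _) ?_) h2
    refine (norm_add_le _ _).trans ?_
    simp [norm_smul, abs_of_nonneg ha, abs_of_nonneg hb]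
  · rw [contDiff_one_iff_hasFDerivAt]
    refine ⟨_, ?_, fun ξ => (hgrad ξ).hasFDerivAt⟩
    exact (InnerProductSpace.toDual ℝ _).continuous.comp (continuous_radial g hgc hg0)
  · rw [hfF]; simp [hF0]
  · intro ξ
    have hn := norm_nonneg ξ
    refine ⟨⟨?_, ?_⟩, ?_⟩
    · rw [hfF]
      show _ ≤ F ‖ξ‖
      generalize ‖ξ‖ = t at hn
      have ha : 0 < Real.sqrt σ := Real.sqrt_pos.mpr h0
      have haa : Real.sqrt σ * Real.sqrt σ = σ := Real.mul_self_sqrt h0.le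
      have ha1 : Real.sqrt σ < 1 := by nlinarith
      generalize Real.sqrt σ = a at *
      rcases le_total t a with hta | hta
      · have := hFmono 0 t le_rfl hn
        nlinarith
      · have e1 := hlow a t hta
        have e2 := hFmono 0 a le_rfl ha.le
        have e3 : 1 - a ≤ g a := by
          have e4 : a / σ = a⁻¹ := by rw [← haa]; field_simp
          have e5 : Real.arctan a ≤ a := by
            have q := Real.le_tan (Real.arctan_nonneg.mpr ha.le) (Real.arctan_lt_pi_div_two a)
            rwa [Real.tan_arctan] at q
          simp only [hg]
          rw [e4, Real.arctan_inv_of_pos ha]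
          have e6 : 2 / Real.pi ≤ 1 := by
            rw [div_le_one hpi]; exact Real.two_le_pi
          have e7 : 2 / Real.pi * (Real.pi / 2 - Real.arctan a)
              = 1 - 2 / Real.pi * Real.arctan a := by field_simp
          have e8 : 0 ≤ Real.arctan a := Real.arctan_nonneg.mpr ha.le
          rw [e7]
          nlinarith
        have e9 := mul_le_mul_of_nonneg_right e3 (sub_nonneg.mpr hta)
        nlinarith
    · rw [hfF]; exact hupp _ hn
    · rw [(hgrad ξ).gradient, norm_smul, norm_div, norm_norm, Real.norm_eq_abs,
        abs_of_nonneg (hgnn _ hn)]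
      exact (div_mul_self_le_aux _ _ (hgnn _ hn)).trans (hg1 _)
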